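/- arXiv:1607.07397 — 2 statements merged into one kernel-verified Lean document; each statement's English description precedes it below -/
import Mathlib

section
/- The quadratic cyclotomic Gaudin Hamiltonians pairwise commute: ℋ_i · ℋ_j = ℋ_j · ℋ_i in U(𝔤)^{⊗N} for all i, j ∈ {1, …, N}. -/
open scoped BigOperators

/-- The i-th quadratic cyclotomic Gaudin Hamiltonian ℋ_i, as an element of an
algebra A receiving commuting embeddings ι j : U(𝔤) → A of the tensor factors
of U(𝔤)^{⊗N}. -/
noncomputable def cycGaudinHam
    {g : Type*} [LieRing g] [LieAlgebra ℂ g]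
    {A : Type*} [Ring A] [Algebra ℂ A]
    {κ : Type*} [Fintype κ]
    (Iup Idown : κ → g)
    (σ : Module.End ℂ g)
    (T : ℕ) (ω : ℂ)
    {N : ℕ} (z : Fin N → ℂ)
    (ι : Fin N → (UniversalEnvelopingAlgebra ℂ g →ₐ[ℂ] A))
    (i : Fin N) : A :=
  (∑ k ∈ Finset.range T, ∑ j ∈ Finset.univ.erase i, ∑ a : κ,
    (z i - ω ^ (-(k : ℤ)) * z j)⁻¹ •
      (ι i (UniversalEnvelopingAlgebra.ι ℂ (Iup a)) *
        ι j (UniversalEnvelopingAlgebra.ι ℂ ((σ ^ k) (Idown a)))))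
  + ∑ k ∈ Finset.Ico 1 T, ∑ a : κ,
      ((1 - ω ^ k) * z i)⁻¹ •
        ι i (UniversalEnvelopingAlgebra.ι ℂ (Iup a) *
          UniversalEnvelopingAlgebra.ι ℂ ((σ ^ k) (Idown a)))

/-!
Write `Ω(X, Y)` for the split Casimir element with its legs acting at the sites `X` and `Y`.

After expansion, the commutator of two Hamiltonians `H_i` and `H_j` is the commutator of the
two-site Hamiltonians of `i` and `j`, plus a sum over the remaining sites `l` of a three-site term.
The three-site term vanishes by the classical Yang–Baxter equation, which combines a partial
fraction identity with the fact that `Ω(X, Y)` commutes with `Ω(X, Z) + Ω(Y, Z)`.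

For two sites, `x H_X + y H_Y` does not depend on the positions: it is the energy
`C = ∑ₖ Ω(X, Yₖ) + s(X) + s(Y)`, where `s` is the self-interaction and `Yₖ` is `Y` twisted by the
`k`-th power of the automorphism. Since `(1 - ωᵏ)⁻¹ + (1 - ω⁻ᵏ)⁻¹ = 1`, one also has
`C = s(X + Yₖ) + Ω(X, Yₖ)` for every `k`. As `Ω(X, Yₖ)` commutes with the diagonal action `X + Yₖ`,
it commutes with `C`; so does `s(X)`, because `∑ₖ Ω(X, Yₖ)` only involves the action at `X` of the
fixed points of the automorphism. Thus `H_X` commutes with `C`, hence with `H_Y`.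
-/

namespace CyclotomicGaudin

section Casimir

variable {R V A κ : Type*} [CommRing R] [AddCommGroup V] [Module R V] [Ring A] [Algebra R A]
  [Fintype κ] {B : LinearMap.BilinForm R V} {u d : κ → V} {X Y Z : V →ₗ[R] A}

/-- The families `u` and `d` are dual with respect to the symmetric form `B`. This is encoded by the
expansion of vectors in `u`, so neither family has to be linearly independent. -/
structure IsDualFrame (B : LinearMap.BilinForm R V) (u d : κ → V) : Prop where
  symm : B.IsSymm
  sum_smul : ∀ x, ∑ a, B x (d a) • u a = x

section

variable {M : Type*} [AddCommGroup M] [Module R M]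

theorem IsDualFrame.sum_adjoint_swap (hB : IsDualFrame B u d) {φ ψ : V → V}
    (h : B.IsAdjointPair B φ ψ) (F : V →ₗ[R] V →ₗ[R] M) :
    ∑ a, F (φ (d a)) (u a) = ∑ a, F (u a) (ψ (d a)) := by
  have expand_left (x y : V) : F x y = ∑ b, B x (d b) • F (u b) y := by
    conv_lhs => rw [← hB.sum_smul x]
    simp
  have expand_right (x y : V) : F x y = ∑ b, B y (d b) • F x (u b) := by
    conv_lhs => rw [← hB.sum_smul y]
    simp
  calc ∑ a, F (φ (d a)) (u a)
      = ∑ a, ∑ b, B (φ (d a)) (d b) • F (u b) (u a) :=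
        Finset.sum_congr rfl fun a _ => expand_left _ _
    _ = ∑ b, ∑ a, B (φ (d a)) (d b) • F (u b) (u a) := Finset.sum_comm
    _ = ∑ b, F (u b) (ψ (d b)) := Finset.sum_congr rfl fun b _ => by
        simp only [h _ _, hB.symm.eq _ (ψ (d b)), ← expand_right]

theorem IsDualFrame.sum_swap (hB : IsDualFrame B u d) (F : V →ₗ[R] V →ₗ[R] M) :
    ∑ a, F (d a) (u a) = ∑ a, F (u a) (d a) :=
  hB.sum_adjoint_swap LinearMap.isAdjointPair_id F

theorem IsDualFrame.sum_adjoint (hB : IsDualFrame B u d) {φ ψ : Module.End R V}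
    (h : B.IsAdjointPair B φ ψ) (F : V →ₗ[R] V →ₗ[R] M) :
    ∑ a, F (φ (u a)) (d a) = ∑ a, F (u a) (ψ (d a)) :=
  (hB.sum_swap (F ∘ₗ φ)).symm.trans (hB.sum_adjoint_swap h F)

end

/-- The image `∑ a, X (u a) * Y (d a)` of the split Casimir element `∑ a, u a ⊗ d a` under a pair
of linear maps into an algebra. -/
def casimir (u d : κ → V) (X Y : V →ₗ[R] A) : A :=
  ∑ a, X (u a) * Y (d a)

/-- Every element of the image of `X` commutes with every element of the image of `Y`. -/
def ImagesCommute (X Y : V →ₗ[R] A) : Prop :=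
  ∀ x y, Commute (X x) (Y y)

theorem ImagesCommute.symm (h : ImagesCommute X Y) : ImagesCommute Y X :=
  fun x y => (h y x).symm

theorem ImagesCommute.comp (h : ImagesCommute X Y) (φ ψ : Module.End R V) :
    ImagesCommute (X ∘ₗ φ) (Y ∘ₗ ψ) :=
  fun x y => h (φ x) (ψ y)

theorem ImagesCommute.comp_right (h : ImagesCommute X Y) (ψ : Module.End R V) :
    ImagesCommute X (Y ∘ₗ ψ) :=
  fun x y => h x (ψ y)

theorem casimir_add_left : casimir u d (X + Y) Z = casimir u d X Z + casimir u d Y Z := by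
  simp [casimir, add_mul, Finset.sum_add_distrib]

theorem casimir_add_right : casimir u d X (Y + Z) = casimir u d X Y + casimir u d X Z := by
  simp [casimir, mul_add, Finset.sum_add_distrib]

theorem casimir_neg_right : casimir u d X (-Y) = -casimir u d X Y := by
  simp [casimir]

theorem commute_casimir {c : A} (hX : ∀ x, Commute c (X x)) (hY : ∀ x, Commute c (Y x)) :
    Commute c (casimir u d X Y) :=
  Commute.sum_right _ _ _ fun _ _ => (hX _).mul_right (hY _)

theorem IsDualFrame.casimir_comm (hB : IsDualFrame B u d) (h : ImagesCommute X Y) :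
    casimir u d X Y = casimir u d Y X :=
  calc ∑ a, X (u a) * Y (d a)
      = ∑ a, X (d a) * Y (u a) := (hB.sum_swap ((LinearMap.mul R A).compl₁₂ X Y)).symm
    _ = ∑ a, Y (u a) * X (d a) := Finset.sum_congr rfl fun a _ => h (d a) (u a)

theorem IsDualFrame.casimir_comp_left (hB : IsDualFrame B u d) {φ ψ : Module.End R V}
    (h : B.IsAdjointPair B φ ψ) : casimir u d (X ∘ₗ φ) Y = casimir u d X (Y ∘ₗ ψ) :=
  hB.sum_adjoint h ((LinearMap.mul R A).compl₁₂ X Y)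

end Casimir

section Lie

attribute [local instance] LieRing.ofAssociativeRing

variable {R g A κ : Type*} [CommRing R] [LieRing g] [LieAlgebra R g] [Ring A] [Algebra R A]
  [Fintype κ] {B : LinearMap.BilinForm R g} {u d : κ → g} {X Y Z : g →ₗ[R] A}

/-- `X` is a morphism of Lie algebras to the commutator Lie algebra of `A`. A predicate on linear
maps is used, rather than `LieHom`, so that the actions at several sites can be added. -/
def IsLieHom (X : g →ₗ[R] A) : Prop :=
  ∀ x y, X ⁅x, y⁆ = ⁅X x, X y⁆

theorem IsLieHom.comp (hX : IsLieHom X) {φ : Module.End R g} (hφ : ∀ x y, φ ⁅x, y⁆ = ⁅φ x, φ y⁆) :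
    IsLieHom (X ∘ₗ φ) := fun x y => by
  simp only [LinearMap.comp_apply, hφ, hX (φ x)]

theorem IsDualFrame.commute_casimir_of_lie_eq (hB : IsDualFrame B u d) (hinv : B.lieInvariant g)
    {c : A} (y : g) (hX : ∀ x, ⁅c, X x⁆ = X ⁅y, x⁆) (hY : ∀ x, ⁅c, Y x⁆ = Y ⁅y, x⁆) :
    Commute c (casimir u d X Y) := by
  have had : B.IsAdjointPair B (LieAlgebra.ad R g y) (-LieAlgebra.ad R g y : Module.End R g) :=
    fun x x' => by simp only [LieAlgebra.ad_apply, LinearMap.neg_apply, map_neg, hinv y x x']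
  have leibniz (a b : A) : ⁅c, a * b⁆ = ⁅c, a⁆ * b + a * ⁅c, b⁆ := by
    simp only [Ring.lie_def]
    noncomm_ring
  rw [commute_iff_lie_eq]
  calc ⁅c, casimir u d X Y⁆
      = casimir u d (X ∘ₗ LieAlgebra.ad R g y) Y + casimir u d X (Y ∘ₗ LieAlgebra.ad R g y) := by
        simp only [casimir, lie_sum, leibniz, hX, hY, Finset.sum_add_distrib, LinearMap.comp_apply,
          LieAlgebra.ad_apply]
    _ = 0 := by
        rw [hB.casimir_comp_left had, LinearMap.comp_neg, casimir_neg_right, neg_add_cancel]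

theorem IsDualFrame.commute_casimir_add_apply (hB : IsDualFrame B u d) (hinv : B.lieInvariant g)
    (hX : IsLieHom X) (hY : IsLieHom Y) (hXY : ImagesCommute X Y) (x : g) :
    Commute (casimir u d X Y) ((X + Y) x) := by
  refine (hB.commute_casimir_of_lie_eq hinv x (fun y => ?_) fun y => ?_).symm
  · rw [LinearMap.add_apply, add_lie, hX, (hXY.symm x y).lie_eq, add_zero]
  · rw [LinearMap.add_apply, add_lie, hY, (hXY x y).lie_eq, zero_add]

theorem IsDualFrame.commute_casimir_casimir_add (hB : IsDualFrame B u d)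
    (hinv : B.lieInvariant g) (hX : IsLieHom X) (hY : IsLieHom Y) (hXY : ImagesCommute X Y)
    (hXZ : ImagesCommute X Z) (hYZ : ImagesCommute Y Z) :
    Commute (casimir u d X Y) (casimir u d X Z + casimir u d Y Z) := by
  rw [← casimir_add_left]
  exact commute_casimir (hB.commute_casimir_add_apply hinv hX hY hXY) fun z =>
    (commute_casimir (fun x => (hXZ x z).symm) fun y => (hYZ y z).symm).symm

theorem IsDualFrame.lie_casimir_rotate (hB : IsDualFrame B u d) (hinv : B.lieInvariant g)
    (hX : IsLieHom X) (hY : IsLieHom Y) (hXY : ImagesCommute X Y) (hXZ : ImagesCommute X Z)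
    (hYZ : ImagesCommute Y Z) :
    ⁅casimir u d X Z, casimir u d X Y⁆ = ⁅casimir u d X Y, casimir u d Y Z⁆ := by
  have h := (hB.commute_casimir_casimir_add hinv hX hY hXY hXZ hYZ).lie_eq
  rw [← lie_skew, neg_eq_iff_add_eq_zero, ← lie_add, h]

theorem IsDualFrame.lie_casimir_antisymm (hB : IsDualFrame B u d) (hinv : B.lieInvariant g)
    (hY : IsLieHom Y) (hZ : IsLieHom Z) (hXY : ImagesCommute X Y) (hXZ : ImagesCommute X Z)
    (hYZ : ImagesCommute Y Z) :
    ⁅casimir u d X Z, casimir u d Y Z⁆ = -⁅casimir u d X Y, casimir u d Y Z⁆ := by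
  have h := (hB.commute_casimir_casimir_add hinv hY hZ hYZ hXY.symm hXZ.symm).symm.lie_eq
  rw [add_lie, hB.casimir_comm hXY.symm, hB.casimir_comm hXZ.symm] at h
  exact eq_neg_of_add_eq_zero_right h

theorem smul_lie_smul (r s : R) (a b : A) : ⁅r • a, s • b⁆ = (r * s) • ⁅a, b⁆ := by
  rw [smul_lie, lie_smul s a b, smul_smul]

/-- A dual frame of an invariant form on a Lie algebra on which the group `G` acts, through `S`, by
Lie algebra automorphisms preserving the form. -/
structure IsEquivariantFrame {G : Type*} [AddCommGroup G] (B : LinearMap.BilinForm R g)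
    (u d : κ → g) (S : AddChar G (Module.End R g)) : Prop extends IsDualFrame B u d where
  lieInvariant : B.lieInvariant g
  isOrthogonal : ∀ k, B.IsOrthogonal (S k)
  map_lie : ∀ k x y, S k ⁅x, y⁆ = ⁅S k x, S k y⁆

end Lie

section Twisted

variable {R V A κ G : Type*} [CommRing R] [AddCommGroup V] [Module R V] [Ring A] [Algebra R A]
  [Fintype κ] [AddCommGroup G] {B : LinearMap.BilinForm R V} {u d : κ → V}
  {S : AddChar G (Module.End R V)} {X Y : V →ₗ[R] A}

theorem comp_map_comp_map (X : V →ₗ[R] A) (k m : G) : (X ∘ₗ S k) ∘ₗ S m = X ∘ₗ S (k + m) := by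
  rw [LinearMap.comp_assoc, AddChar.map_add_eq_mul, Module.End.mul_eq_comp]

theorem isAdjointPair_map_neg (hS : ∀ k, B.IsOrthogonal (S k)) (k : G) :
    B.IsAdjointPair B (S k) (S (-k)) := fun x y => by
  rw [← hS k x, ← Module.End.mul_apply, ← AddChar.map_add_eq_mul, add_neg_cancel,
    AddChar.map_zero_eq_one, Module.End.one_apply]

theorem IsDualFrame.casimir_comp_map_left (hB : IsDualFrame B u d)
    (hS : ∀ k, B.IsOrthogonal (S k)) (k : G) :
    casimir u d (X ∘ₗ S k) Y = casimir u d X (Y ∘ₗ S (-k)) :=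
  hB.casimir_comp_left (isAdjointPair_map_neg hS k)

theorem IsDualFrame.casimir_comp_map_comp_map (hB : IsDualFrame B u d)
    (hS : ∀ k, B.IsOrthogonal (S k)) (k m : G) :
    casimir u d (X ∘ₗ S k) (Y ∘ₗ S m) = casimir u d X (Y ∘ₗ S (m - k)) := by
  rw [hB.casimir_comp_map_left hS, comp_map_comp_map, sub_eq_add_neg]

theorem IsDualFrame.casimir_comp_map_comm (hB : IsDualFrame B u d)
    (hS : ∀ k, B.IsOrthogonal (S k)) (h : ImagesCommute X Y) (k : G) :
    casimir u d Y (X ∘ₗ S k) = casimir u d X (Y ∘ₗ S (-k)) := by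
  rw [hB.casimir_comm (h.symm.comp_right _), hB.casimir_comp_map_left hS]

variable [Fintype G]

theorem map_sum_map (k : G) (x : V) : S k ((∑ p, S p) x) = (∑ p, S p) x := by
  simp only [LinearMap.sum_apply, map_sum, ← Module.End.mul_apply, ← AddChar.map_add_eq_mul]
  exact Equiv.sum_comp (Equiv.addLeft k) fun p => S p x

/-- The split Casimir element summed over the action of `G` on its second leg. -/
def orbitCasimir (S : AddChar G (Module.End R V)) (u d : κ → V) (X Y : V →ₗ[R] A) : A :=
  ∑ k, casimir u d X (Y ∘ₗ S k)

theorem IsDualFrame.orbitCasimir_eq_casimir_sum (hB : IsDualFrame B u d)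
    (hS : ∀ k, B.IsOrthogonal (S k)) :
    orbitCasimir S u d X Y = casimir u d (X ∘ₗ ∑ k, S k) Y := by
  have hsum : X ∘ₗ ∑ k, S k = ∑ k, X ∘ₗ S k := by ext; simp
  calc orbitCasimir S u d X Y
      = ∑ k, casimir u d X (Y ∘ₗ S (-k)) :=
        (Equiv.sum_comp (Equiv.neg G) fun k => casimir u d X (Y ∘ₗ S k)).symm
    _ = ∑ k, casimir u d (X ∘ₗ S k) Y := by simp only [hB.casimir_comp_map_left hS]
    _ = casimir u d (X ∘ₗ ∑ k, S k) Y := by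
        simp only [hsum, casimir, LinearMap.sum_apply, Finset.sum_mul]
        exact Finset.sum_comm

end Twisted

section RMatrix

variable {K V A κ G : Type*} [Field K] [AddCommGroup V] [Module K V] [Ring A] [Algebra K A]
  [Fintype κ] [AddCommGroup G] {B : LinearMap.BilinForm K V} {u d : κ → V}
  {S : AddChar G (Module.End K V)} {χ : AddChar G K} {X Y : V →ₗ[K] A}

theorem sub_inv_map_mul_ne_zero {x y : K} (h : ∀ k, x ≠ χ k * y) (k : G) :
    x - (χ k)⁻¹ * y ≠ 0 := by
  rw [← AddChar.map_neg_eq_inv]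
  exact sub_ne_zero.2 (h (-k))

variable [Fintype G]

/-- The classical `r`-matrix `∑ₖ (x - χ(k)⁻¹ y)⁻¹ Ωₖ` evaluated at two sites with spectral
parameters `x` and `y`, where `Ωₖ` is the split Casimir element with second leg twisted by `k`. -/
def rMatrix (S : AddChar G (Module.End K V)) (χ : AddChar G K) (u d : κ → V) (x y : K)
    (X Y : V →ₗ[K] A) : A :=
  ∑ k, (x - (χ k)⁻¹ * y)⁻¹ • casimir u d X (Y ∘ₗ S k)

/-- The interaction of a site at `1` with its own translates under `G`. The summand of `k = 0`
vanishes because `(1 - χ 0)⁻¹ = 0⁻¹ = 0`. -/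
def selfTerm (S : AddChar G (Module.End K V)) (χ : AddChar G K) (u d : κ → V)
    (X : V →ₗ[K] A) : A :=
  ∑ k, (1 - χ k)⁻¹ • casimir u d X (X ∘ₗ S k)

/-- The conserved quantity of the two-site model with sites `X` and `Y`: the combination
`x H_X + y H_Y` of its Hamiltonians, which does not depend on the positions `x` and `y`. -/
def twoSiteEnergy (S : AddChar G (Module.End K V)) (χ : AddChar G K) (u d : κ → V)
    (X Y : V →ₗ[K] A) : A :=
  orbitCasimir S u d X Y + selfTerm S χ u d X + selfTerm S χ u d Y

theorem commute_rMatrix {c : A} {x y : K} (hX : ∀ a, Commute c (X a))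
    (hY : ∀ a, Commute c (Y a)) : Commute c (rMatrix S χ u d x y X Y) :=
  Commute.sum_right _ _ _ fun _ _ => (commute_casimir hX fun _ => hY _).smul_right _

theorem commute_selfTerm {c : A} (hX : ∀ a, Commute c (X a)) :
    Commute c (selfTerm S χ u d X) :=
  Commute.sum_right _ _ _ fun _ _ => (commute_casimir hX fun _ => hX _).smul_right _

theorem IsDualFrame.rMatrix_eq_sum_right (hB : IsDualFrame B u d)
    (hS : ∀ k, B.IsOrthogonal (S k)) (x y : K) (k : G) :
    rMatrix S χ u d x y X Y
      = ∑ m, (x - χ k / χ m * y)⁻¹ • casimir u d (X ∘ₗ S k) (Y ∘ₗ S m) := by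
  simp only [rMatrix, hB.casimir_comp_map_comp_map hS, ← inv_div (χ _) (χ k),
    ← AddChar.map_sub_eq_div]
  exact (Equiv.sum_comp (Equiv.subRight k)
    fun m => (x - (χ m)⁻¹ * y)⁻¹ • casimir u d X (Y ∘ₗ S m)).symm

theorem IsDualFrame.rMatrix_eq_sum_left (hB : IsDualFrame B u d)
    (hS : ∀ k, B.IsOrthogonal (S k)) (x y : K) (m : G) :
    rMatrix S χ u d x y X Y
      = ∑ k, (x - χ k / χ m * y)⁻¹ • casimir u d (X ∘ₗ S k) (Y ∘ₗ S m) := by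
  simp only [rMatrix, hB.casimir_comp_map_comp_map hS, ← inv_div (χ m),
    ← AddChar.map_sub_eq_div]
  exact (Equiv.sum_comp (Equiv.subLeft m)
    fun k => (x - (χ k)⁻¹ * y)⁻¹ • casimir u d X (Y ∘ₗ S k)).symm

theorem IsDualFrame.rMatrix_comm (hB : IsDualFrame B u d) (hS : ∀ k, B.IsOrthogonal (S k))
    (h : ImagesCommute X Y) (x y : K) :
    rMatrix S χ u d y x Y X = ∑ k, (y - χ k * x)⁻¹ • casimir u d X (Y ∘ₗ S k) := by
  simp only [rMatrix, hB.casimir_comp_map_comm hS h, ← AddChar.map_neg_eq_inv]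
  exact Equiv.sum_comp (Equiv.neg G) fun k => (y - χ k * x)⁻¹ • casimir u d X (Y ∘ₗ S k)

theorem IsDualFrame.smul_rMatrix_add_smul_rMatrix (hB : IsDualFrame B u d)
    (hS : ∀ k, B.IsOrthogonal (S k)) (h : ImagesCommute X Y) {x y : K}
    (hxy : ∀ k, x ≠ χ k * y) :
    x • rMatrix S χ u d x y X Y + y • rMatrix S χ u d y x Y X = orbitCasimir S u d X Y := by
  rw [hB.rMatrix_comm hS h]
  simp only [rMatrix, orbitCasimir, Finset.smul_sum, smul_smul, ← Finset.sum_add_distrib,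
    ← add_smul]
  refine Finset.sum_congr rfl fun k _ => ?_
  have hχ : χ k ≠ 0 := (χ.val_isUnit k).ne_zero
  have hfactor : y - χ k * x = -χ k * (x - (χ k)⁻¹ * y) := by field_simp; ring
  have hcoeff : x * (x - (χ k)⁻¹ * y)⁻¹ + y * (y - χ k * x)⁻¹ = 1 :=
    calc x * (x - (χ k)⁻¹ * y)⁻¹ + y * (y - χ k * x)⁻¹
        = (x - (χ k)⁻¹ * y) * (x - (χ k)⁻¹ * y)⁻¹ := by rw [hfactor, mul_inv, inv_neg]; ring
      _ = 1 := mul_inv_cancel₀ (sub_inv_map_mul_ne_zero hxy k)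
  rw [hcoeff, one_smul]

theorem sum_inv_one_sub_smul_add_neg {M : Type*} [AddCommGroup M] [Module K M]
    (hχ : Function.Injective χ) (f : G → M) :
    ∑ k, (1 - χ k)⁻¹ • (f k + f (-k)) + f 0 = ∑ k, f k := by
  classical
  have hcoeff (k : G) (hk : k ≠ 0) : (1 - χ k)⁻¹ + (1 - χ (-k))⁻¹ = 1 := by
    have h1 : χ k ≠ 1 := fun h => hk (hχ (h.trans χ.map_zero_eq_one.symm))
    have h0 : χ k ≠ 0 := (χ.val_isUnit k).ne_zero
    have hfactor : 1 - (χ k)⁻¹ = -(χ k)⁻¹ * (1 - χ k) := by field_simp; ring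
    rw [AddChar.map_neg_eq_inv, hfactor, mul_inv, inv_neg, inv_inv]
    calc (1 - χ k)⁻¹ + -χ k * (1 - χ k)⁻¹
        = (1 - χ k) * (1 - χ k)⁻¹ := by ring
      _ = 1 := mul_inv_cancel₀ (sub_ne_zero.2 h1.symm)
  have hneg : ∑ k, (1 - χ k)⁻¹ • f (-k) = ∑ k, (1 - χ (-k))⁻¹ • f k := by
    simpa using Equiv.sum_comp (Equiv.neg G) fun k => (1 - χ (-k))⁻¹ • f k
  simp only [smul_add, Finset.sum_add_distrib, hneg]
  rw [← Finset.sum_add_distrib, ← Finset.sum_erase_add _ _ (Finset.mem_univ (0 : G)),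
    ← Finset.sum_erase_add Finset.univ f (Finset.mem_univ (0 : G))]
  congr 1
  simp only [neg_zero, AddChar.map_zero_eq_one, sub_self, inv_zero, zero_smul, add_zero]
  exact Finset.sum_congr rfl fun k hk => by
    rw [← add_smul, hcoeff k (Finset.ne_of_mem_erase hk), one_smul]

theorem IsDualFrame.selfTerm_add_comp_map (hB : IsDualFrame B u d)
    (hS : ∀ k, B.IsOrthogonal (S k)) (hχ : Function.Injective χ) (hXY : ImagesCommute X Y)
    (k : G) :
    selfTerm S χ u d (X + Y ∘ₗ S k) + casimir u d X (Y ∘ₗ S k)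
      = twoSiteEnergy S χ u d X Y := by
  set f : G → A := fun p => casimir u d X (Y ∘ₗ S (k + p)) with hf
  have hcross (p : G) : casimir u d (Y ∘ₗ S k) (X ∘ₗ S p) = f (-p) := by
    rw [hB.casimir_comp_map_comp_map hS, hB.casimir_comp_map_comm hS hXY, neg_sub,
      sub_eq_add_neg]
  have hself : selfTerm S χ u d (X + Y ∘ₗ S k) = selfTerm S χ u d X + selfTerm S χ u d Y
      + ∑ p, (1 - χ p)⁻¹ • (f p + f (-p)) := by
    simp only [selfTerm, ← Finset.sum_add_distrib, ← smul_add]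
    refine Finset.sum_congr rfl fun p _ => congrArg _ ?_
    rw [LinearMap.add_comp, casimir_add_left, casimir_add_right, casimir_add_right, hcross,
      comp_map_comp_map, hB.casimir_comp_map_comp_map hS, add_sub_cancel_left]
    abel
  have hf0 : casimir u d X (Y ∘ₗ S k) = f 0 := by simp only [hf, add_zero]
  have horbit : ∑ p, f p = orbitCasimir S u d X Y :=
    Equiv.sum_comp (Equiv.addLeft k) fun p => casimir u d X (Y ∘ₗ S p)
  rw [hself, hf0, add_assoc, sum_inv_one_sub_smul_add_neg hχ, horbit, twoSiteEnergy]
  abel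

end RMatrix

section TwistedLie

attribute [local instance] LieRing.ofAssociativeRing

variable {K g A κ G : Type*} [Field K] [LieRing g] [LieAlgebra K g] [Ring A] [Algebra K A]
  [Fintype κ] [AddCommGroup G] {B : LinearMap.BilinForm K g} {u d : κ → g}
  {S : AddChar G (Module.End K g)} {χ : AddChar G K} {X Y Z : g →ₗ[K] A}

theorem yangBaxter_coeff {x y v a b : K} (ha : a ≠ 0) (hxy : x - a⁻¹ * y ≠ 0)
    (hxv : x - b⁻¹ * v ≠ 0) (hyv : y - a / b * v ≠ 0) :
    (x - a⁻¹ * y)⁻¹ * (y - a / b * v)⁻¹ + (x - b⁻¹ * v)⁻¹ * (y - a * x)⁻¹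
      = (x - b⁻¹ * v)⁻¹ * (y - a / b * v)⁻¹ := by
  have hxy' : y - a * x = -a * (x - a⁻¹ * y) := by field_simp; ring
  have hyv' : y - a / b * v = a * ((x - b⁻¹ * v) - (x - a⁻¹ * y)) := by field_simp; ring
  rw [hyv'] at hyv ⊢
  rw [hxy']
  generalize x - a⁻¹ * y = p at *
  generalize x - b⁻¹ * v = q at *
  have hqp : q - p ≠ 0 := right_ne_zero_of_mul hyv
  field_simp
  ring

variable [Fintype G]

theorem IsEquivariantFrame.classical_yangBaxter (hE : IsEquivariantFrame B u d S)
    (hX : IsLieHom X) (hY : IsLieHom Y) (hZ : IsLieHom Z) (hXY : ImagesCommute X Y)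
    (hXZ : ImagesCommute X Z) (hYZ : ImagesCommute Y Z) {x y v : K} (hxy : ∀ k, x ≠ χ k * y)
    (hxv : ∀ k, x ≠ χ k * v) (hyv : ∀ k, y ≠ χ k * v) :
    ⁅rMatrix S χ u d x y X Y, rMatrix S χ u d y v Y Z⁆
      + ⁅rMatrix S χ u d x v X Z, rMatrix S χ u d y x Y X⁆
      + ⁅rMatrix S χ u d x v X Z, rMatrix S χ u d y v Y Z⁆ = 0 := by
  set t : G → G → A := fun p q =>
    ⁅casimir u d X (Y ∘ₗ S p), casimir u d (Y ∘ₗ S p) (Z ∘ₗ S q)⁆ with ht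
  have hYp (p : G) : IsLieHom (Y ∘ₗ S p) := hY.comp (hE.map_lie p)
  have hZq (q : G) : IsLieHom (Z ∘ₗ S q) := hZ.comp (hE.map_lie q)
  have h₁ : ⁅rMatrix S χ u d x y X Y, rMatrix S χ u d y v Y Z⁆
      = ∑ p, ∑ q, ((x - (χ p)⁻¹ * y)⁻¹ * (y - χ p / χ q * v)⁻¹) • t p q := by
    conv_lhs => rw [rMatrix, sum_lie]
    refine Finset.sum_congr rfl fun p _ => ?_
    rw [hE.rMatrix_eq_sum_right hE.isOrthogonal y v p, lie_sum]
    simp only [smul_lie_smul, ht]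
  have h₂ : ⁅rMatrix S χ u d x v X Z, rMatrix S χ u d y x Y X⁆
      = ∑ p, ∑ q, ((x - (χ q)⁻¹ * v)⁻¹ * (y - χ p * x)⁻¹) • t p q := by
    rw [hE.rMatrix_comm hE.isOrthogonal hXY, lie_sum]
    refine Finset.sum_congr rfl fun p _ => ?_
    simp only [rMatrix, sum_lie, smul_lie_smul, ht,
      hE.lie_casimir_rotate hE.lieInvariant hX (hYp p) (hXY.comp_right _) (hXZ.comp_right _)
        (hYZ.comp _ _)]
  have h₃ : ⁅rMatrix S χ u d x v X Z, rMatrix S χ u d y v Y Z⁆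
      = -∑ p, ∑ q, ((x - (χ q)⁻¹ * v)⁻¹ * (y - χ p / χ q * v)⁻¹) • t p q := by
    conv_lhs => rw [rMatrix, sum_lie]
    rw [Finset.sum_comm, ← Finset.sum_neg_distrib]
    refine Finset.sum_congr rfl fun q _ => ?_
    rw [hE.rMatrix_eq_sum_left hE.isOrthogonal y v q, lie_sum, ← Finset.sum_neg_distrib]
    simp only [smul_lie_smul, ht, smul_neg,
      hE.lie_casimir_antisymm hE.lieInvariant (hYp _) (hZq q) (hXY.comp_right _)
        (hXZ.comp_right _) (hYZ.comp _ _)]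
  rw [h₁, h₂, h₃, ← sub_eq_add_neg, sub_eq_zero]
  simp only [← Finset.sum_add_distrib, ← add_smul]
  refine Finset.sum_congr rfl fun p _ => Finset.sum_congr rfl fun q _ => ?_
  have hpq : y - χ p / χ q * v ≠ 0 := AddChar.map_sub_eq_div χ p q ▸ sub_ne_zero.2 (hyv (p - q))
  rw [yangBaxter_coeff (χ.val_isUnit p).ne_zero (sub_inv_map_mul_ne_zero hxy p)
    (sub_inv_map_mul_ne_zero hxv q) hpq]

theorem IsEquivariantFrame.commute_apply_selfTerm (hE : IsEquivariantFrame B u d S)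
    (hX : IsLieHom X) {x : g} (hx : ∀ k, S k x = x) : Commute (X x) (selfTerm S χ u d X) :=
  Commute.sum_right _ _ _ fun k _ => (hE.commute_casimir_of_lie_eq hE.lieInvariant x
    (fun y => (hX x y).symm) fun y => by
      rw [LinearMap.comp_apply, LinearMap.comp_apply, hE.map_lie, hX, hx]).smul_right _

theorem IsEquivariantFrame.commute_selfTerm_orbitCasimir (hE : IsEquivariantFrame B u d S)
    (hX : IsLieHom X) (hXY : ImagesCommute X Y) :
    Commute (selfTerm S χ u d X) (orbitCasimir S u d X Y) := by
  rw [hE.orbitCasimir_eq_casimir_sum hE.isOrthogonal]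
  exact commute_casimir (fun x => (hE.commute_apply_selfTerm hX fun k => map_sum_map k x).symm)
    fun y => (commute_selfTerm fun x => (hXY x y).symm).symm

theorem IsEquivariantFrame.commute_rMatrix_twoSiteEnergy (hE : IsEquivariantFrame B u d S)
    (hχ : Function.Injective χ) (hX : IsLieHom X) (hY : IsLieHom Y) (hXY : ImagesCommute X Y)
    (x y : K) : Commute (rMatrix S χ u d x y X Y) (twoSiteEnergy S χ u d X Y) :=
  Commute.sum_left _ _ _ fun k _ => Commute.smul_left (by
    rw [← hE.selfTerm_add_comp_map hE.isOrthogonal hχ hXY k]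
    exact (commute_selfTerm <| hE.commute_casimir_add_apply hE.lieInvariant hX
      (hY.comp (hE.map_lie k)) (hXY.comp_right _)).add_right (Commute.refl _)) _

theorem IsEquivariantFrame.commute_twoSite (hE : IsEquivariantFrame B u d S)
    (hχ : Function.Injective χ) (hX : IsLieHom X) (hY : IsLieHom Y) (hXY : ImagesCommute X Y)
    {x y : K} (hx : x ≠ 0) (hy : y ≠ 0) (hxy : ∀ k, x ≠ χ k * y) :
    Commute (rMatrix S χ u d x y X Y + x⁻¹ • selfTerm S χ u d X)
      (rMatrix S χ u d y x Y X + y⁻¹ • selfTerm S χ u d Y) := by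
  set HX := rMatrix S χ u d x y X Y + x⁻¹ • selfTerm S χ u d X with hHX
  set HY := rMatrix S χ u d y x Y X + y⁻¹ • selfTerm S χ u d Y with hHY
  have henergy : x • HX + y • HY = twoSiteEnergy S χ u d X Y := by
    rw [twoSiteEnergy, ← hE.smul_rMatrix_add_smul_rMatrix hE.isOrthogonal hXY hxy, hHX, hHY,
      smul_add, smul_add, smul_inv_smul₀ hx, smul_inv_smul₀ hy]
    abel
  have hselfs : Commute (selfTerm S χ u d X) (selfTerm S χ u d Y) :=
    commute_selfTerm fun y => (commute_selfTerm fun x => (hXY x y).symm).symm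
  have hself : Commute (selfTerm S χ u d X) (twoSiteEnergy S χ u d X Y) :=
    ((hE.commute_selfTerm_orbitCasimir hX hXY).add_right (Commute.refl _)).add_right hselfs
  have hconserved : Commute HX (twoSiteEnergy S χ u d X Y) :=
    (hE.commute_rMatrix_twoSiteEnergy hχ hX hY hXY x y).add_left (hself.smul_left _)
  have hHY_eq : HY = y⁻¹ • (twoSiteEnergy S χ u d X Y - x • HX) := by
    rw [← henergy, add_sub_cancel_left, inv_smul_smul₀ hy]
  rw [hHY_eq]
  exact (hconserved.sub_right ((Commute.refl HX).smul_right x)).smul_right _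

end TwistedLie

section Hamiltonian

attribute [local instance] LieRing.ofAssociativeRing

theorem commute_add_sum_add_sum {A I : Type*} [Ring A] {s : Finset I} {a b : A} {p q : I → A}
    (hab : Commute a b) (hpq : ∀ l ∈ s, ∀ m ∈ s, l ≠ m → Commute (p l) (q m))
    (h : ∀ l ∈ s, ⁅a, q l⁆ + ⁅p l, b⁆ + ⁅p l, q l⁆ = 0) :
    Commute (a + ∑ l ∈ s, p l) (b + ∑ l ∈ s, q l) := by
  have hdiag : ⁅∑ l ∈ s, p l, ∑ l ∈ s, q l⁆ = ∑ l ∈ s, ⁅p l, q l⁆ := by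
    rw [sum_lie_sum]
    exact Finset.sum_congr rfl fun l hl => Finset.sum_eq_single_of_mem l hl
      fun m hm hml => (hpq l hl m hm hml.symm).lie_eq
  rw [commute_iff_lie_eq, add_lie, lie_add, lie_add, hab.lie_eq, zero_add, hdiag, lie_sum,
    sum_lie, ← add_assoc, ← Finset.sum_add_distrib, ← Finset.sum_add_distrib]
  exact Finset.sum_eq_zero h

variable {K g A κ G I : Type*} [Field K] [LieRing g] [LieAlgebra K g] [Ring A] [Algebra K A]
  [Fintype κ] [AddCommGroup G] [Fintype G]
  {B : LinearMap.BilinForm K g} {u d : κ → g} {S : AddChar G (Module.End K g)} {χ : AddChar G K}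
  {X : I → g →ₗ[K] A} {z : I → K}

theorem IsEquivariantFrame.threeSite_lie_sum_eq_zero (hE : IsEquivariantFrame B u d S)
    (hX : ∀ i, IsLieHom (X i)) (hcomm : ∀ i j, i ≠ j → ImagesCommute (X i) (X j))
    (hz : ∀ i j, i ≠ j → ∀ k, z i ≠ χ k * z j) {i j l : I} (hij : i ≠ j) (hil : i ≠ l)
    (hjl : j ≠ l) :
    ⁅rMatrix S χ u d (z i) (z j) (X i) (X j) + (z i)⁻¹ • selfTerm S χ u d (X i),
        rMatrix S χ u d (z j) (z l) (X j) (X l)⁆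
      + ⁅rMatrix S χ u d (z i) (z l) (X i) (X l),
        rMatrix S χ u d (z j) (z i) (X j) (X i) + (z j)⁻¹ • selfTerm S χ u d (X j)⁆
      + ⁅rMatrix S χ u d (z i) (z l) (X i) (X l), rMatrix S χ u d (z j) (z l) (X j) (X l)⁆
      = 0 := by
  have hself {m n p : I} (hmn : m ≠ n) (hmp : m ≠ p) :
      Commute (selfTerm S χ u d (X m)) (rMatrix S χ u d (z n) (z p) (X n) (X p)) :=
    commute_rMatrix (fun y => (commute_selfTerm fun x => (hcomm m n hmn x y).symm).symm)
      fun y => (commute_selfTerm fun x => (hcomm m p hmp x y).symm).symm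
  rw [add_lie, lie_add, ((hself hij hil).smul_left _).lie_eq,
    ((hself hij.symm hjl).symm.smul_right _).lie_eq, add_zero, add_zero]
  exact hE.classical_yangBaxter (hX i) (hX j) (hX l) (hcomm i j hij) (hcomm i l hil)
    (hcomm j l hjl) (hz i j hij) (hz i l hil) (hz j l hjl)

variable [Fintype I] [DecidableEq I]

/-- The Gaudin Hamiltonian at the site `i` of the model on sites `z` whose symmetry group `G` acts
on spectral parameters through `χ` and on the Lie algebra through `S`. -/
def hamiltonian (S : AddChar G (Module.End K g)) (χ : AddChar G K) (u d : κ → g) (z : I → K)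
    (X : I → g →ₗ[K] A) (i : I) : A :=
  ∑ l ∈ Finset.univ.erase i, rMatrix S χ u d (z i) (z l) (X i) (X l)
    + (z i)⁻¹ • selfTerm S χ u d (X i)

theorem hamiltonian_eq_twoSite_add {i j : I} (hij : i ≠ j) :
    hamiltonian S χ u d z X i
      = rMatrix S χ u d (z i) (z j) (X i) (X j) + (z i)⁻¹ • selfTerm S χ u d (X i)
        + ∑ l ∈ (Finset.univ.erase i).erase j, rMatrix S χ u d (z i) (z l) (X i) (X l) := by
  rw [hamiltonian, ← Finset.add_sum_erase _ _ (Finset.mem_erase.2 ⟨hij.symm, Finset.mem_univ j⟩)]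
  abel

end Hamiltonian

section Cyclotomic

/-- The additive character `k ↦ m ^ k` of `ZMod n` attached to an element `m` with `m ^ n = 1` of a
monoid. It extends `AddChar.zmodChar` to monoids that are not commutative, such as the
endomorphisms of a module. -/
def zmodPow {M : Type*} [Monoid M] (n : ℕ) [NeZero n] {m : M} (hm : m ^ n = 1) :
    AddChar (ZMod n) M where
  toFun k := m ^ k.val
  map_zero_eq_one' := by rw [ZMod.val_zero, pow_zero]
  map_add_eq_mul' k l := by rw [ZMod.val_add, ← pow_eq_pow_mod _ hm, pow_add]

theorem zmodPow_injective {M : Type*} [CommMonoid M] {n : ℕ} [NeZero n] {m : M}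
    (hm : IsPrimitiveRoot m n) : Function.Injective (zmodPow n hm.pow_eq_one) :=
  fun k l h => ZMod.val_injective n (hm.pow_inj (ZMod.val_lt k) (ZMod.val_lt l) h)

theorem sum_zmod_val {M : Type*} [AddCommMonoid M] (n : ℕ) [NeZero n] (f : ℕ → M) :
    ∑ k : ZMod n, f k.val = ∑ k ∈ Finset.range n, f k :=
  Finset.sum_nbij' ZMod.val Nat.cast (fun k _ => Finset.mem_range.2 (ZMod.val_lt k))
    (fun _ _ => Finset.mem_univ _) (fun k _ => ZMod.natCast_zmod_val k)
    (fun _ hk => ZMod.val_cast_of_lt (Finset.mem_range.1 hk)) fun _ _ => rfl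

section Equivariant

variable {R g κ : Type*} [CommRing R] [LieRing g] [LieAlgebra R g] [Fintype κ]
  {B : LinearMap.BilinForm R g} {u d : κ → g} {σ : Module.End R g}

theorem pow_apply_lie (hσ : ∀ x y, σ ⁅x, y⁆ = ⁅σ x, σ y⁆) (n : ℕ) (x y : g) :
    (σ ^ n) ⁅x, y⁆ = ⁅(σ ^ n) x, (σ ^ n) y⁆ := by
  induction n with
  | zero => rfl
  | succ n ih => simp only [pow_succ', Module.End.mul_apply, ih, hσ]

theorem isOrthogonal_pow (hσ : B.IsOrthogonal σ) (n : ℕ) :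
    B.IsOrthogonal (σ ^ n : Module.End R g) := fun x y => by
  induction n with
  | zero => rfl
  | succ n ih => rw [pow_succ', Module.End.mul_apply, Module.End.mul_apply, hσ, ih]

theorem IsDualFrame.isEquivariantFrame_zmodPow (hB : IsDualFrame B u d)
    (hinv : ∀ x y z, B ⁅x, y⁆ z = B x ⁅y, z⁆) {T : ℕ} [NeZero T]
    (hσLie : ∀ x y, σ ⁅x, y⁆ = ⁅σ x, σ y⁆) (hσT : σ ^ T = 1) (hσB : B.IsOrthogonal σ) :
    IsEquivariantFrame B u d (zmodPow T hσT) where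
  toIsDualFrame := hB
  lieInvariant x y z := by rw [← lie_skew, map_neg, LinearMap.neg_apply, hinv]
  isOrthogonal k := isOrthogonal_pow hσB k.val
  map_lie k := pow_apply_lie hσLie k.val

end Equivariant

attribute [local instance] LieRing.ofAssociativeRing

/-- The restriction to the Lie algebra of a representation `f` of its enveloping algebra. -/
def siteMap {R g A : Type*} [CommRing R] [LieRing g] [LieAlgebra R g] [Ring A] [Algebra R A]
    (f : UniversalEnvelopingAlgebra R g →ₐ[R] A) : g →ₗ[R] A :=
  ((UniversalEnvelopingAlgebra.lift R).symm f : g →ₗ⁅R⁆ A)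

theorem isLieHom_siteMap {R g A : Type*} [CommRing R] [LieRing g] [LieAlgebra R g] [Ring A]
    [Algebra R A] (f : UniversalEnvelopingAlgebra R g →ₐ[R] A) : IsLieHom (siteMap f) :=
  LieHom.map_lie ((UniversalEnvelopingAlgebra.lift R).symm f)

theorem cycGaudinHam_eq_hamiltonian {g A κ : Type*} [LieRing g] [LieAlgebra ℂ g] [Ring A]
    [Algebra ℂ A] [Fintype κ] (u d : κ → g) {σ : Module.End ℂ g} {T : ℕ} [NeZero T] {ω : ℂ}
    (hσ : σ ^ T = 1) (hω : ω ^ T = 1) {N : ℕ} (z : Fin N → ℂ)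
    (ι : Fin N → UniversalEnvelopingAlgebra ℂ g →ₐ[ℂ] A) (i : Fin N) :
    cycGaudinHam u d σ T ω z ι i
      = hamiltonian (zmodPow T hσ) (zmodPow T hω) u d z (fun j => siteMap (ι j)) i := by
  have hpair (j : Fin N) :
      rMatrix (zmodPow T hσ) (zmodPow T hω) u d (z i) (z j) (siteMap (ι i)) (siteMap (ι j))
        = ∑ k ∈ Finset.range T, (z i - (ω ^ k)⁻¹ * z j)⁻¹
            • casimir u d (siteMap (ι i)) (siteMap (ι j) ∘ₗ σ ^ k) :=
    sum_zmod_val T fun k => (z i - (ω ^ k)⁻¹ * z j)⁻¹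
      • casimir u d (siteMap (ι i)) (siteMap (ι j) ∘ₗ σ ^ k)
  have hself : selfTerm (zmodPow T hσ) (zmodPow T hω) u d (siteMap (ι i))
      = ∑ k ∈ Finset.Ico 1 T, (1 - ω ^ k)⁻¹
          • casimir u d (siteMap (ι i)) (siteMap (ι i) ∘ₗ σ ^ k) := by
    refine (sum_zmod_val T fun k => (1 - ω ^ k)⁻¹
      • casimir u d (siteMap (ι i)) (siteMap (ι i) ∘ₗ σ ^ k)).trans ?_
    rw [Finset.range_eq_Ico, Finset.sum_eq_sum_Ico_succ_bot (NeZero.pos T), pow_zero, sub_self,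
      inv_zero, zero_smul, zero_add]
  rw [hamiltonian, hself, Finset.sum_congr rfl fun j _ => hpair j, Finset.sum_comm]
  simp [cycGaudinHam, siteMap, casimir, Finset.smul_sum, smul_smul, mul_comm]

end Cyclotomic

end CyclotomicGaudin

open CyclotomicGaudin

theorem stmt_17_general {K g A κ G I : Type*} [Field K] [LieRing g] [LieAlgebra K g] [Ring A]
    [Algebra K A] [Fintype κ] [AddCommGroup G] [Fintype G] [Fintype I] [DecidableEq I]
    {B : LinearMap.BilinForm K g} {u d : κ → g} {S : AddChar G (Module.End K g)}
    {χ : AddChar G K} {X : I → g →ₗ[K] A} {z : I → K} (hE : IsEquivariantFrame B u d S)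
    (hχ : Function.Injective χ) (hz0 : ∀ i, z i ≠ 0) (hz : ∀ i j, i ≠ j → ∀ k, z i ≠ χ k * z j)
    (hX : ∀ i, IsLieHom (X i)) (hcomm : ∀ i j, i ≠ j → ImagesCommute (X i) (X j)) (i j : I) :
    Commute (hamiltonian S χ u d z X i) (hamiltonian S χ u d z X j) := by
  obtain rfl | hij := eq_or_ne i j
  · rfl
  rw [hamiltonian_eq_twoSite_add hij, hamiltonian_eq_twoSite_add hij.symm,
    Finset.erase_right_comm]
  refine commute_add_sum_add_sum
    (hE.commute_twoSite hχ (hX i) (hX j) (hcomm i j hij) (hz0 i) (hz0 j) (hz i j hij))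
    (fun l hl m hm hlm => ?_) fun l hl => ?_
  · have hlj : l ≠ j := Finset.ne_of_mem_erase (Finset.mem_of_mem_erase hl)
    have hmi : m ≠ i := Finset.ne_of_mem_erase hm
    have hdisjoint {n : I} (hni : n ≠ i) (hnl : n ≠ l) (x : g) :
        Commute (rMatrix S χ u d (z i) (z l) (X i) (X l)) (X n x) :=
      (commute_rMatrix (hcomm n i hni x) (hcomm n l hnl x)).symm
    exact commute_rMatrix (hdisjoint hij.symm hlj.symm) (hdisjoint hmi hlm.symm)
  · obtain ⟨hli, hlj⟩ : l ≠ i ∧ l ≠ j := by simpa using hl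
    exact hE.threeSite_lie_sum_eq_zero hX hcomm hz hij hli.symm hlj.symm

/-- the quadratic cyclotomic Gaudin Hamiltonians pairwise
commute: ℋ_i ℋ_j = ℋ_j ℋ_i. -/
theorem stmt_17
    {g : Type*} [LieRing g] [LieAlgebra ℂ g] [FiniteDimensional ℂ g]
    {A : Type*} [Ring A] [Algebra ℂ A]
    {κ : Type*} [Fintype κ] [DecidableEq κ]
    (B : g →ₗ[ℂ] g →ₗ[ℂ] ℂ)
    (hBsymm : ∀ x y : g, B x y = B y x)
    (hBinv : ∀ x y z : g, B ⁅x, y⁆ z = B x ⁅y, z⁆)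
    (hBnd : ∀ x : g, (∀ y : g, B x y = 0) → x = 0)
    (Iup Idown : κ → g)
    (hdual : ∀ a b : κ, B (Iup a) (Idown b) = if a = b then 1 else 0)
    (hcomplete : ∀ x : g, ∑ a : κ, B x (Idown a) • Iup a = x)
    (T : ℕ) (hT : 1 ≤ T) (ω : ℂ) (hω : IsPrimitiveRoot ω T)
    (σ : Module.End ℂ g)
    (hσLie : ∀ x y : g, σ ⁅x, y⁆ = ⁅σ x, σ y⁆)
    (hσT : σ ^ T = 1)
    (hσB : ∀ x y : g, B (σ x) (σ y) = B x y)
    (N : ℕ) (hN : 1 ≤ N)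
    (z : Fin N → ℂ) (hz0 : ∀ i, z i ≠ 0)
    (hzdisj : ∀ i j : Fin N, i ≠ j → ∀ k < T, z i ≠ ω ^ k * z j)
    (ι : Fin N → (UniversalEnvelopingAlgebra ℂ g →ₐ[ℂ] A))
    (hcomm : ∀ i j : Fin N, i ≠ j →
      ∀ u v : UniversalEnvelopingAlgebra ℂ g, ι i u * ι j v = ι j v * ι i u)
    (i j : Fin N) :
    cycGaudinHam Iup Idown σ T ω z ι i * cycGaudinHam Iup Idown σ T ω z ι j
      = cycGaudinHam Iup Idown σ T ω z ι j *
          cycGaudinHam Iup Idown σ T ω z ι i := by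
  have : NeZero T := ⟨Nat.one_le_iff_ne_zero.1 hT⟩
  have hE : IsEquivariantFrame B Iup Idown (zmodPow T hσT) :=
    IsDualFrame.isEquivariantFrame_zmodPow ⟨⟨hBsymm⟩, hcomplete⟩ hBinv hσLie hσT hσB
  simp only [cycGaudinHam_eq_hamiltonian Iup Idown hσT hω.pow_eq_one]
  exact stmt_17_general hE (zmodPow_injective hω) hz0
    (fun i j hij k => hzdisj i j hij _ (ZMod.val_lt k)) (fun i => isLieHom_siteMap (ι i))
    (fun i j hij x y => hcomm i j hij _ _) i j
end

section
/- Each quadratic cyclotomic Gaudin Hamiltonian commutes with the diagonal action of the σ-invariant subalgebra: for every x ∈ 𝔤 with σ(x) = x and every i ∈ {1, …, N}, one has ℋ_i · (Σ_{j=1}^{N} ι_j(x)) = (Σ_{j=1}^{N} ι_j(x)) · ℋ_i in U(𝔤)^{⊗N}. -/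
open scoped BigOperators

/-!
The Casimir tensor `∑ a, I^a ⊗ I_a` is killed by the diagonal action of `g` on `g ⊗ g`, because the
form is invariant. If `X` is the diagonal element `∑ j, ι_j(x)`, then `[X, ι_j(y)] = ι_j([x, y])`
since distinct sites commute, so `y ⊗ y' ↦ ι_i(y) ι_j(σ^k y')` intertwines `x` with `[X, ·]` as soon
as `σ^k` commutes with `ad x`, which follows from `σ x = x`. Each coupling of sites `i` and `j`,
including `i = j`, is the image of the Casimir tensor under such a map, hence commutes with `X`.
-/

section CasimirTensor

open TensorProduct

variable {R M N κ : Type*} [CommRing R] [Fintype κ]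
  [AddCommGroup M] [Module R M] [AddCommGroup N] [Module R N]
  {B : M →ₗ[R] N →ₗ[R] R} {e : κ → M} {e' : κ → N}

theorem sum_apply_smul_eq_of_separatingRight (hB : B.SeparatingRight)
    (he : ∀ m, ∑ a, B m (e' a) • e a = m) (n : N) : ∑ a, B (e a) n • e' a = n := by
  refine sub_eq_zero.mp (hB _ fun m => ?_)
  rw [map_sub, sub_eq_zero]
  calc B m (∑ a, B (e a) n • e' a)
      = B (∑ a, B m (e' a) • e a) n := by simp [mul_comm]
    _ = B m n := by rw [he]

theorem lie_sum_tmul_eq_zero {L : Type*} [LieRing L] [LieAlgebra R L]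
    [LieRingModule L M] [LieModule R L M] [LieRingModule L N] [LieModule R L N] {x : L}
    (hB : ∀ m n, B ⁅x, m⁆ n = -B m ⁅x, n⁆)
    (he : ∀ m, ∑ a, B m (e' a) • e a = m) (he' : ∀ n, ∑ a, B (e a) n • e' a = n) :
    ⁅x, ∑ a, e a ⊗ₜ[R] e' a⁆ = 0 := by
  have lie_left : ∑ a, ⁅x, e a⁆ ⊗ₜ[R] e' a = -∑ b, e b ⊗ₜ[R] ⁅x, e' b⁆ :=
    calc ∑ a, ⁅x, e a⁆ ⊗ₜ[R] e' a
        = ∑ a, (∑ b, B ⁅x, e a⁆ (e' b) • e b) ⊗ₜ[R] e' a := by simp only [he]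
      _ = ∑ b, ∑ a, (B ⁅x, e a⁆ (e' b) • e b) ⊗ₜ[R] e' a := by
          simp only [sum_tmul]
          exact Finset.sum_comm
      _ = -∑ b, e b ⊗ₜ[R] ∑ a, B (e a) ⁅x, e' b⁆ • e' a := by
          simp only [hB, neg_smul, neg_tmul, smul_tmul, tmul_sum, Finset.sum_neg_distrib]
      _ = -∑ b, e b ⊗ₜ[R] ⁅x, e' b⁆ := by simp only [he']
  simp only [lie_sum, TensorProduct.LieModule.lie_tmul_right, Finset.sum_add_distrib, lie_left,
    neg_add_cancel]

end CasimirTensor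

theorem lieInvariant_of_apply_lie_left {R L : Type*} [CommRing R] [LieRing L] [LieAlgebra R L]
    {B : LinearMap.BilinForm R L} (hB : ∀ x y z, B ⁅x, y⁆ z = B x ⁅y, z⁆) : B.lieInvariant L := by
  intro x y z
  rw [← lie_skew, map_neg, LinearMap.neg_apply, hB]

theorem commute_pow_ad_of_map_lie {R L : Type*} [CommRing R] [LieRing L] [LieAlgebra R L]
    {σ : Module.End R L} (hσ : ∀ y z, σ ⁅y, z⁆ = ⁅σ y, σ z⁆) {x : L} (hx : σ x = x) (k : ℕ) :
    Commute (σ ^ k) (LieAlgebra.ad R L x) := by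
  refine Commute.pow_left (LinearMap.ext fun y => ?_) k
  simp [hσ, hx]

section AssociativeAlgebra

open TensorProduct

attribute [local instance] LieRing.ofAssociativeRing

variable {R L A : Type*} [CommRing R] [LieRing L] [LieAlgebra R L] [Ring A] [Algebra R A]

theorem lie_mul'_map {M N : Type*}
    [AddCommGroup M] [Module R M] [LieRingModule L M] [LieModule R L M]
    [AddCommGroup N] [Module R N] [LieRingModule L N] [LieModule R L N]
    {x : L} {X : A} {f : M →ₗ[R] A} {h : N →ₗ[R] A}
    (hf : ∀ m, ⁅X, f m⁆ = f ⁅x, m⁆) (hh : ∀ n, ⁅X, h n⁆ = h ⁅x, n⁆) (t : M ⊗[R] N) :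
    ⁅X, LinearMap.mul' R A (map f h t)⁆ = LinearMap.mul' R A (map f h ⁅x, t⁆) := by
  induction t with
  | zero => simp
  | add t u ht hu => simp only [map_add, lie_add, ht, hu]
  | tmul m n =>
    have leibniz : ⁅X, f m * h n⁆ = ⁅X, f m⁆ * h n + f m * ⁅X, h n⁆ := by
      simp only [Ring.lie_def]
      noncomm_ring
    simp only [map_tmul, LinearMap.mul'_apply, leibniz, hf, hh,
      TensorProduct.LieModule.lie_tmul_right, map_add]

theorem lie_sum_apply_of_commute {J : Type*} [Fintype J] {ρ : J → L →ₗ⁅R⁆ A}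
    (hρ : ∀ i j, i ≠ j → ∀ y y', Commute (ρ i y) (ρ j y')) (x : L) (j : J) (y : L) :
    ⁅∑ i, ρ i x, ρ j y⁆ = ρ j ⁅x, y⁆ := by
  rw [LieHom.map_lie, sum_lie, Fintype.sum_eq_single j]
  exact fun i hij => commute_iff_lie_eq.mp (hρ i j hij x y)

variable {κ : Type*} [Fintype κ]

/-- The image `∑ a, ρ₁(e a) ρ₂(φ(e' a))` of the Casimir tensor `∑ a, e a ⊗ e' a`, twisted by `φ` in
its second factor. With `ρ₁`, `ρ₂` the embeddings of `L` at sites `i`, `j` and `φ = σ ^ k`, this is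
the coupling of the two sites in the cyclotomic Gaudin Hamiltonian. -/
def twistedCasimir (e e' : κ → L) (φ : Module.End R L) (ρ₁ ρ₂ : L →ₗ⁅R⁆ A) : A :=
  ∑ a, ρ₁ (e a) * ρ₂ (φ (e' a))

variable {B : LinearMap.BilinForm R L} {e e' : κ → L}

theorem commute_twistedCasimir (hBsep : B.SeparatingRight) (hBinv : B.lieInvariant L)
    (he : ∀ y, ∑ a, B y (e' a) • e a = y) {x : L} {φ : Module.End R L}
    (hφ : Commute φ (LieAlgebra.ad R L x)) {X : A} {ρ₁ ρ₂ : L →ₗ⁅R⁆ A}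
    (h₁ : ∀ y, ⁅X, ρ₁ y⁆ = ρ₁ ⁅x, y⁆) (h₂ : ∀ y, ⁅X, ρ₂ y⁆ = ρ₂ ⁅x, y⁆) :
    Commute (twistedCasimir e e' φ ρ₁ ρ₂) X := by
  have h₂φ (y : L) : ⁅X, ρ₂ (φ y)⁆ = ρ₂ (φ ⁅x, y⁆) :=
    (h₂ (φ y)).trans (congrArg ρ₂ (LinearMap.congr_fun hφ.eq y).symm)
  have casimir_invariant : ⁅x, ∑ a, e a ⊗ₜ[R] e' a⁆ = 0 :=
    lie_sum_tmul_eq_zero (hBinv x) he (sum_apply_smul_eq_of_separatingRight hBsep he)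
  have intertwine := lie_mul'_map (f := (ρ₁ : L →ₗ[R] A)) (h := (ρ₂ : L →ₗ[R] A) ∘ₗ φ)
    h₁ h₂φ (∑ a, e a ⊗ₜ[R] e' a)
  rw [casimir_invariant, map_zero, map_zero] at intertwine
  simpa [twistedCasimir] using (commute_iff_lie_eq.mpr intertwine).symm

theorem stmt_18_general (hBsep : B.SeparatingRight) (hBinv : B.lieInvariant L)
    (he : ∀ y, ∑ a, B y (e' a) • e a = y) {J K : Type*} [Fintype J] {ρ : J → L →ₗ⁅R⁆ A}
    (hρ : ∀ i j, i ≠ j → ∀ y y', Commute (ρ i y) (ρ j y')) {x : L}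
    {s : Finset K} {φ : K → Module.End R L} (hφ : ∀ k ∈ s, Commute (φ k) (LieAlgebra.ad R L x))
    (c : K → J → R) (i : J) :
    Commute (∑ k ∈ s, ∑ j, c k j • twistedCasimir e e' (φ k) (ρ i) (ρ j)) (∑ j, ρ j x) :=
  .sum_left _ _ _ fun k hk => .sum_left _ _ _ fun j _ =>
    (commute_twistedCasimir hBsep hBinv he (hφ k hk)
      (lie_sum_apply_of_commute hρ x i) (lie_sum_apply_of_commute hρ x j)).smul_left _

end AssociativeAlgebra

/-- The term `k = 0`, `j = i`, absent from the Hamiltonian, is zero here because `0⁻¹ = 0`. -/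
theorem cycGaudinHam_eq_sum_twistedCasimir {g A κ : Type*} [LieRing g] [LieAlgebra ℂ g]
    [Ring A] [Algebra ℂ A] [Fintype κ] (Iup Idown : κ → g) (σ : Module.End ℂ g) (T : ℕ) (ω : ℂ)
    {N : ℕ} (z : Fin N → ℂ) (ι : Fin N → (UniversalEnvelopingAlgebra ℂ g →ₐ[ℂ] A)) (i : Fin N) :
    cycGaudinHam Iup Idown σ T ω z ι i = ∑ k ∈ Finset.range T, ∑ j,
      (if j = i then ((1 - ω ^ k) * z i)⁻¹ else (z i - ω ^ (-(k : ℤ)) * z j)⁻¹) •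
        twistedCasimir Iup Idown (σ ^ k) ((UniversalEnvelopingAlgebra.lift ℂ).symm (ι i))
          ((UniversalEnvelopingAlgebra.lift ℂ).symm (ι j)) := by
  have self_coupling : ∑ k ∈ Finset.Ico 1 T, ∑ a, ((1 - ω ^ k) * z i)⁻¹ •
        ι i (UniversalEnvelopingAlgebra.ι ℂ (Iup a) *
          UniversalEnvelopingAlgebra.ι ℂ ((σ ^ k) (Idown a))) =
      ∑ k ∈ Finset.range T, ((1 - ω ^ k) * z i)⁻¹ • ∑ a,
        ι i (UniversalEnvelopingAlgebra.ι ℂ (Iup a)) *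
          ι i (UniversalEnvelopingAlgebra.ι ℂ ((σ ^ k) (Idown a))) := by
    simp only [map_mul, ← Finset.smul_sum]
    refine Finset.sum_subset (fun k hk => by simp_all) fun k hkT hk => ?_
    obtain rfl : k = 0 := by simp_all
    simp
  rw [cycGaudinHam, self_coupling, ← Finset.sum_add_distrib]
  refine Finset.sum_congr rfl fun k _ => ?_
  rw [← Finset.sum_erase_add _ _ (Finset.mem_univ i), if_pos rfl]
  congr 1
  refine Finset.sum_congr rfl fun j hj => ?_
  rw [if_neg (Finset.ne_of_mem_erase hj), ← Finset.smul_sum]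
  rfl

/-- each quadratic cyclotomic Gaudin Hamiltonian commutes with
the diagonal action of the σ-invariant subalgebra 𝔤^σ. -/
theorem stmt_18
    {g : Type*} [LieRing g] [LieAlgebra ℂ g] [FiniteDimensional ℂ g]
    {A : Type*} [Ring A] [Algebra ℂ A]
    {κ : Type*} [Fintype κ] [DecidableEq κ]
    (B : g →ₗ[ℂ] g →ₗ[ℂ] ℂ)
    (hBsymm : ∀ x y : g, B x y = B y x)
    (hBinv : ∀ x y z : g, B ⁅x, y⁆ z = B x ⁅y, z⁆)
    (hBnd : ∀ x : g, (∀ y : g, B x y = 0) → x = 0)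
    (Iup Idown : κ → g)
    (hdual : ∀ a b : κ, B (Iup a) (Idown b) = if a = b then 1 else 0)
    (hcomplete : ∀ x : g, ∑ a : κ, B x (Idown a) • Iup a = x)
    (T : ℕ) (hT : 1 ≤ T) (ω : ℂ) (hω : IsPrimitiveRoot ω T)
    (σ : Module.End ℂ g)
    (hσLie : ∀ x y : g, σ ⁅x, y⁆ = ⁅σ x, σ y⁆)
    (hσT : σ ^ T = 1)
    (hσB : ∀ x y : g, B (σ x) (σ y) = B x y)
    (N : ℕ) (hN : 1 ≤ N)
    (z : Fin N → ℂ) (hz0 : ∀ i, z i ≠ 0)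
    (hzdisj : ∀ i j : Fin N, i ≠ j → ∀ k < T, z i ≠ ω ^ k * z j)
    (ι : Fin N → (UniversalEnvelopingAlgebra ℂ g →ₐ[ℂ] A))
    (hcomm : ∀ i j : Fin N, i ≠ j →
      ∀ u v : UniversalEnvelopingAlgebra ℂ g, ι i u * ι j v = ι j v * ι i u)
    (x : g) (hx : σ x = x) (i : Fin N) :
    cycGaudinHam Iup Idown σ T ω z ι i *
        (∑ j : Fin N, ι j (UniversalEnvelopingAlgebra.ι ℂ x))
      = (∑ j : Fin N, ι j (UniversalEnvelopingAlgebra.ι ℂ x)) *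
          cycGaudinHam Iup Idown σ T ω z ι i := by
  have hBsep : B.SeparatingRight := fun y hy => hBnd y fun w => (hBsymm y w).trans (hy w)
  rw [cycGaudinHam_eq_sum_twistedCasimir]
  exact stmt_18_general hBsep (lieInvariant_of_apply_lie_left hBinv) hcomplete
    (ρ := fun j => (UniversalEnvelopingAlgebra.lift ℂ).symm (ι j))
    (fun i j hij _ _ => hcomm i j hij _ _) (fun k _ => commute_pow_ad_of_map_lie hσLie hx k) _ i
end
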